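/- For every coanalytic set A ⊆ 2^ℕ there is a real z ∈ 2^ℕ and a program p such that for every x ∈ 2^ℕ the oracle computation φ_p^z(x) halts with output ⟨1,0,0,...⟩ if x ∈ A and output ⟨0,0,0,...⟩ if x ∉ A; the same conclusion holds for every analytic set A ⊆ 2^ℕ. -/

import Mathlib

open scoped Classical

namespace ITTM

/-- A real is an element of Cantor space. -/
abbrev R := ℕ → Bool

/-- The constant-zero real. -/
def zeroR : R := fun _ => false

/-- The real ⟨1,0,0,...⟩ coding the answer "Yes". -/
def oneR : R := fun n => decide (n = 0)

/-- The real coding a natural number `p`: `p` ones followed by zeros. -/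
def natR (p : ℕ) : R := fun n => decide (n < p)

/-- The real coding the pair of reals `(y, z)`. -/
def pairR (y z : R) : R := fun n => if n % 2 = 0 then y (n / 2) else z (n / 2)

/-- A snapshot of an infinite time Turing machine computation with state set
`Fin (Q+1)`: the current state, the head position, and the contents of the
three tapes (tape 0 is the input tape, tape 1 the scratch tape, tape 2 the
output tape); cells hold values in `Bool` (`true` = 1, `false` = 0). -/
structure Snapshot (Q : ℕ) where
  state : Fin (Q + 1)
  head : ℕ
  tape : Fin 3 → ℕ → Bool

/-- An infinite time Turing machine program: a finite set of states
`Fin (Q+1)` with distinguished start, limit and halt states, and a finite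
transition table which, given the current state and the three cell values
read by the head, specifies the next state, the three values to write, and
the direction to move (`true` = right, `false` = left). -/
structure Machine where
  Q : ℕ
  start : Fin (Q + 1)
  limit : Fin (Q + 1)
  halt : Fin (Q + 1)
  trans : Fin (Q + 1) × (Fin 3 → Bool) → Fin (Q + 1) × (Fin 3 → Bool) × Bool

instance : Inhabited Machine := ⟨⟨0, 0, 0, 0, fun _ => (0, fun _ => false, true)⟩⟩

namespace Machine

/-- The initial snapshot on input `x`: head on cell 0 in the start state, `x`
on the input tape, the other tapes filled with zeros. -/
def init (M : Machine) (x : R) : Snapshot M.Q where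
  state := M.start
  head := 0
  tape := fun i n => if i = 0 then x n else false

/-- One step of computation applied to a snapshot. -/
def stepSnap (M : Machine) (s : Snapshot M.Q) : Snapshot M.Q :=
  let t := M.trans (s.state, fun i => s.tape i s.head)
  { state := t.1
    head := if t.2.2 then s.head + 1 else s.head - 1
    tape := fun i n => if n = s.head then t.2.1 i else s.tape i n }

/-- The snapshot of the computation of machine `M` on input `x` at ordinal
stage `α`, defined by transfinite recursion: at stage 0 the initial snapshot,
at successor stages the transition table is applied, and at limit stages the
head is on cell 0 in the limit state and each cell holds the `limsup` of its
earlier values (1 iff its value was 1 cofinally often below the limit). -/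
noncomputable def snap (M : Machine) (x : R) : Ordinal.{0} → Snapshot M.Q :=
  WellFounded.fix Ordinal.lt_wf fun α ih =>
    if _h0 : α = 0 then M.init x
    else if hs : ∃ β, β < α ∧ α = β + 1 then
      M.stepSnap (ih hs.choose hs.choose_spec.1)
    else
      { state := M.limit
        head := 0
        tape := fun i n =>
          decide (∀ β < α, ∃ γ, β ≤ γ ∧ ∃ hγ : γ < α, (ih γ hγ).tape i n = true) }

/-- The machine is in the halt state at stage `α`. -/
def haltedAt (M : Machine) (x : R) (α : Ordinal) : Prop :=
  (M.snap x α).state = M.halt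

/-- The computation of `M` on input `x` halts exactly at stage `α`: stage `α`
is the first stage at which the machine is in the halt state. -/
def haltsAt (M : Machine) (x : R) (α : Ordinal) : Prop :=
  M.haltedAt x α ∧ ∀ β < α, ¬ M.haltedAt x β

/-- The computation of `M` on input `x` halts. -/
def halts (M : Machine) (x : R) : Prop := ∃ α, M.haltedAt x α

/-- The computation of `M` on input `x` halts with output `y`: at the first
stage at which the machine is in the halt state, the output tape reads `y`. -/
def outputs (M : Machine) (x y : R) : Prop :=
  ∃ α, M.haltsAt x α ∧ (M.snap x α).tape 2 = y

end Machine

/-- Machines are coded by natural numbers. -/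
noncomputable instance : Encodable Machine :=
  Encodable.ofEquiv
    (Σ Q : ℕ, (Fin (Q + 1) × Fin (Q + 1) × Fin (Q + 1)) ×
      ((Fin (Q + 1) × (Fin 3 → Bool)) → Fin (Q + 1) × (Fin 3 → Bool) × Bool))
    { toFun := fun M => ⟨M.Q, (M.start, M.limit, M.halt), M.trans⟩
      invFun := fun s => ⟨s.1, s.2.1.1, s.2.1.2.1, s.2.1.2.2, s.2.2⟩
      left_inv := fun _ => rfl
      right_inv := fun _ => rfl }

/-- The machine coded by the natural number `p`; every natural number codes a
machine, and every machine is coded by some natural number. -/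
noncomputable def prog (p : ℕ) : Machine :=
  ((Encodable.decode p : Option Machine)).getD default

/-- `φ_p(x)` halts with output `y`. -/
noncomputable def phiOutputs (p : ℕ) (x y : R) : Prop := (prog p).outputs x y

/-- A set of reals is infinite time decidable when some machine, on any input
`x`, halts with output ⟨1,0,0,...⟩ if `x ∈ A` and output ⟨0,0,0,...⟩ if
`x ∉ A`. -/
def ITTMDecidable (A : Set R) : Prop :=
  ∃ M : Machine, ∀ x : R, (x ∈ A → M.outputs x oneR) ∧ (x ∉ A → M.outputs x zeroR)

/-- A set of reals is infinite time semi-decidable when it is the halting set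
of some machine. -/
def ITTMSemiDecidable (A : Set R) : Prop :=
  ∃ M : Machine, A = {x : R | M.halts x}

/-- The binary relation on ℕ coded by the real `x`:
`n ◁ k ⟺ x(⟨n,k⟩) = 1` where `⟨·,·⟩` is the pairing function. -/
def rel (x : R) (n k : ℕ) : Prop := x (Nat.pair n k) = true

/-- The field of the relation coded by `x`. -/
def field (x : R) : Set ℕ := {n | ∃ k, rel x n k ∨ rel x k n}

/-- The relation coded by `x`, restricted to its field. -/
def relOn (x : R) : field x → field x → Prop := fun a b => rel x a.1 b.1

/-- The real `x` codes a well-order of (a subset of) ℕ, namely its field. -/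
def codesWellOrder (x : R) : Prop := IsWellOrder (field x) (relOn x)

/-- The set of reals coding well-orders. -/
def WO : Set R := {x | codesWellOrder x}

/-- The real `x` codes a well-order of order type `α`. -/
def codesOrdinal (x : R) (α : Ordinal) : Prop :=
  ∃ h : codesWellOrder x, @Ordinal.type _ (relOn x) h = α

/-- An ordinal is clockable when some machine on input 0 halts exactly at
stage `α`. -/
def Clockable (α : Ordinal) : Prop := ∃ M : Machine, M.haltsAt zeroR α

/-- A real is writable when it is the output of some machine on input 0. -/
def WritableReal (x : R) : Prop := ∃ M : Machine, M.outputs zeroR x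

/-- An ordinal is writable when some writable real codes a well-order of that
order type. -/
def WritableOrdinal (α : Ordinal) : Prop :=
  ∃ x : R, WritableReal x ∧ codesOrdinal x α

/-- A real is eventually writable when some machine on input 0 never halts,
but from some stage onward the content of its output tape is exactly `x`. -/
def EventuallyWritableReal (x : R) : Prop :=
  ∃ M : Machine, ¬ M.halts zeroR ∧ ∃ α : Ordinal, ∀ β ≥ α, (M.snap zeroR β).tape 2 = x

/-- An ordinal is eventually writable when some eventually writable real codes
a well-order of that order type. -/
def EventuallyWritableOrdinal (α : Ordinal) : Prop :=
  ∃ x : R, EventuallyWritableReal x ∧ codesOrdinal x α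

/-- A snapshot of an oracle computation: as before, but with a fourth
(read-only) oracle tape, tape 3. -/
structure OSnapshot (Q : ℕ) where
  state : Fin (Q + 1)
  head : ℕ
  tape : Fin 4 → ℕ → Bool

/-- An infinite time Turing machine program with an oracle tape: the head also
reads the oracle tape cell, but can write only on tapes 0, 1, 2. -/
structure OMachine where
  Q : ℕ
  start : Fin (Q + 1)
  limit : Fin (Q + 1)
  halt : Fin (Q + 1)
  trans : Fin (Q + 1) × (Fin 4 → Bool) → Fin (Q + 1) × (Fin 3 → Bool) × Bool

namespace OMachine

/-- The initial snapshot with oracle `y` and input `x`. -/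
def init (M : OMachine) (y x : R) : OSnapshot M.Q where
  state := M.start
  head := 0
  tape := fun i n => if i = 0 then x n else if i = 3 then y n else false

/-- One step of oracle computation: the oracle tape is read-only. -/
def stepSnap (M : OMachine) (s : OSnapshot M.Q) : OSnapshot M.Q :=
  let t := M.trans (s.state, fun i => s.tape i s.head)
  { state := t.1
    head := if t.2.2 then s.head + 1 else s.head - 1
    tape := fun i n =>
      if h : (i : ℕ) < 3 then
        (if n = s.head then t.2.1 ⟨i, h⟩ else s.tape i n)
      else s.tape i n }

/-- The snapshot of the computation of oracle machine `M` with oracle `y` on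
input `x` at ordinal stage `α` (limit stages via `limsup`, as before; the
oracle tape never changes). -/
noncomputable def snap (M : OMachine) (y x : R) : Ordinal.{0} → OSnapshot M.Q :=
  WellFounded.fix Ordinal.lt_wf fun α ih =>
    if _h0 : α = 0 then M.init y x
    else if hs : ∃ β, β < α ∧ α = β + 1 then
      M.stepSnap (ih hs.choose hs.choose_spec.1)
    else
      { state := M.limit
        head := 0
        tape := fun i n =>
          decide (∀ β < α, ∃ γ, β ≤ γ ∧ ∃ hγ : γ < α, (ih γ hγ).tape i n = true) }

/-- The oracle machine is in the halt state at stage `α`. -/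
def haltedAt (M : OMachine) (y x : R) (α : Ordinal) : Prop :=
  (M.snap y x α).state = M.halt

/-- The oracle computation halts exactly at stage `α`. -/
def haltsAt (M : OMachine) (y x : R) (α : Ordinal) : Prop :=
  M.haltedAt y x α ∧ ∀ β < α, ¬ M.haltedAt y x β

/-- The oracle computation `φ_M^y(x)` halts. -/
def halts (M : OMachine) (y x : R) : Prop := ∃ α, M.haltedAt y x α

/-- `φ_M^y(x)` halts with output `z`. -/
def outputs (M : OMachine) (y x z : R) : Prop :=
  ∃ α, M.haltsAt y x α ∧ (M.snap y x α).tape 2 = z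

end OMachine

end ITTM

/-!
An analytic set is the projection of a closed set, hence the set of those `x` for which a certain
tree `T` of finite sequences has an infinite branch labelled by the bits of `x`. The oracle lists,
for every node, a pattern from which the machine can test whether this node extends the current
branch within `T` and compatibly with `x`.

The machine searches the tree depth first, always trying the nodes above the top of the stack in
the order of their codes. By well-founded induction the search below a node without an infinite
branch ends by removing that node: its failing children are passed one after the other, and the
limit stage reached in this way is recognised by the cell next to the top of the stack, which is
flashed for each attempt and is therefore `1` in the limit. If there is an infinite branch, the
search keeps extending the stack, no cell is flashed cofinally often, and the machine sees at the
limit stage that the stack is infinite.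
-/

namespace ITTM

namespace OMachine

section Stages

variable (M : OMachine) (z x : R)

theorem snap_zero : M.snap z x 0 = M.init z x := by
  rw [snap, WellFounded.fix_eq, dif_pos rfl]

theorem snap_succ (α : Ordinal) : M.snap z x (α + 1) = M.stepSnap (M.snap z x α) := by
  have hs : ∃ β, β < α + 1 ∧ α + 1 = β + 1 := ⟨α, by simp, rfl⟩
  have hc : hs.choose = α := by simpa using hs.choose_spec.2.symm
  rw [snap, WellFounded.fix_eq, dif_neg (by simp), dif_pos hs]
  exact congrArg (fun β => M.stepSnap (M.snap z x β)) hc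

theorem snap_limit {α : Ordinal} (hα : Order.IsSuccLimit α) :
    M.snap z x α =
      { state := M.limit
        head := 0
        tape := fun i n =>
          decide (∀ β < α, ∃ γ, β ≤ γ ∧ γ < α ∧ (M.snap z x γ).tape i n = true) } := by
  have hs : ¬ ∃ β, β < α ∧ α = β + 1 := fun ⟨β, hβ, h⟩ => (hα.add_one_lt hβ).ne h.symm
  rw [snap, WellFounded.fix_eq, dif_neg (by simpa using hα.ne_bot), dif_neg hs]
  simp only [exists_prop]

end Stages

variable {M : OMachine} {z x : R} {α β δ : Ordinal.{0}} {i : Fin 4} {n : ℕ}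

theorem tape_limit_eq_true (hα : Order.IsSuccLimit α)
    (h : ∀ β < α, ∃ γ, β ≤ γ ∧ γ < α ∧ (M.snap z x γ).tape i n = true) :
    (M.snap z x α).tape i n = true := by
  simpa only [M.snap_limit z x hα, decide_eq_true_eq] using h

theorem tape_limit_eq_of_forall {b : Bool} (hα : Order.IsSuccLimit α) (hβ : β < α)
    (h : ∀ γ, β ≤ γ → γ < α → (M.snap z x γ).tape i n = b) : (M.snap z x α).tape i n = b := by
  cases b with
  | false =>
    simp only [M.snap_limit z x hα, decide_eq_false_iff_not]
    intro H
    obtain ⟨γ, hβγ, hγα, hγ⟩ := H β hβ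
    exact Bool.false_ne_true ((h γ hβγ hγα).symm.trans hγ)
  | true =>
    exact tape_limit_eq_true hα fun δ hδ =>
      ⟨max δ β, le_max_left _ _, max_lt hδ hβ, h _ (le_max_right _ _) (max_lt hδ hβ)⟩

/-- Between the stages `α` and `β` the computation does not halt before `β` and every cell outside
`V` keeps its value; `(i, n) ∈ V` stands for cell `n` of tape `i`. -/
def RunsWithin (M : OMachine) (z x : R) (V : Set (Fin 4 × ℕ)) (α β : Ordinal.{0}) : Prop :=
  ∀ γ, α ≤ γ → γ ≤ β → (γ < β → ¬ M.haltedAt z x γ) ∧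
    ∀ i n, (i, n) ∉ V → (M.snap z x γ).tape i n = (M.snap z x α).tape i n

variable {V W : Set (Fin 4 × ℕ)}

theorem RunsWithin.refl (α : Ordinal) : M.RunsWithin z x V α α := fun _ hαγ hγα =>
  ⟨fun h => absurd hαγ h.not_ge, fun _ _ _ => by rw [le_antisymm hγα hαγ]⟩

theorem RunsWithin.trans (h : M.RunsWithin z x V α β) (h' : M.RunsWithin z x V β δ)
    (hαβ : α ≤ β) : M.RunsWithin z x V α δ := by
  intro γ hαγ hγδ
  rcases lt_or_ge γ β with hγ | hγ
  · exact ⟨fun _ => (h γ hαγ hγ.le).1 hγ, (h γ hαγ hγ.le).2⟩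
  · exact ⟨(h' γ hγ hγδ).1, fun i n hin =>
      ((h' γ hγ hγδ).2 i n hin).trans ((h β hαβ le_rfl).2 i n hin)⟩

theorem RunsWithin.mono (h : M.RunsWithin z x V α β) (hVW : V ⊆ W) : M.RunsWithin z x W α β :=
  fun γ hαγ hγβ => ⟨(h γ hαγ hγβ).1, fun i n hin => (h γ hαγ hγβ).2 i n fun hV => hin (hVW hV)⟩

theorem RunsWithin.add_one (hα : ¬ M.haltedAt z x α)
    (h : ∀ i n, (i, n) ∉ V → (M.snap z x (α + 1)).tape i n = (M.snap z x α).tape i n) :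
    M.RunsWithin z x V α (α + 1) := by
  intro γ hαγ hγ
  rcases hαγ.eq_or_lt with rfl | hαγ
  · exact ⟨fun _ => hα, fun _ _ _ => rfl⟩
  · obtain rfl : γ = α + 1 := le_antisymm hγ (Order.add_one_le_of_lt hαγ)
    exact ⟨fun h => absurd h (lt_irrefl _), h⟩

section IncreasingStages

variable {t : ℕ → Ordinal.{0}}

theorem lt_iSup_of_strictMono (ht : StrictMono t) (k : ℕ) : t k < ⨆ k, t k :=
  (ht k.lt_succ_self).trans_le (Ordinal.le_iSup t _)

theorem isSuccLimit_iSup_of_strictMono (ht : StrictMono t) : Order.IsSuccLimit (⨆ k, t k) := by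
  by_contra h
  obtain ⟨k, hk⟩ := exists_eq_ciSup_of_not_isSuccLimit Ordinal.bddAbove_of_small h
  exact (lt_iSup_of_strictMono ht k).ne hk

theorem exists_le_lt_succ_of_lt_iSup (ht : StrictMono t) {K : ℕ} {γ : Ordinal} (hK : t K ≤ γ)
    (hγ : γ < ⨆ k, t k) : ∃ k ≥ K, t k ≤ γ ∧ γ < t (k + 1) := by
  obtain ⟨m, hm⟩ := Ordinal.lt_iSup_iff.1 hγ
  induction m with
  | zero => exact absurd (hm.trans_le (ht.monotone K.zero_le)) hK.not_gt
  | succ m ih =>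
    rcases lt_or_ge γ (t m) with h | h
    · exact ih h
    · exact ⟨m, Nat.lt_succ_iff.1 (ht.lt_iff_lt.1 (hK.trans_lt hm)), h, hm⟩

variable {V : ℕ → Set (Fin 4 × ℕ)}

theorem RunsWithin.tape_eq_of_lt_iSup (ht : StrictMono t)
    (h : ∀ k, M.RunsWithin z x (V k) (t k) (t (k + 1))) {K : ℕ} (hV : ∀ k ≥ K, (i, n) ∉ V k)
    {γ : Ordinal} (hK : t K ≤ γ) (hγ : γ < ⨆ k, t k) :
    (M.snap z x γ).tape i n = (M.snap z x (t K)).tape i n := by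
  have hstages : ∀ k ≥ K, (M.snap z x (t k)).tape i n = (M.snap z x (t K)).tape i n := by
    intro k hk
    induction k, hk using Nat.le_induction with
    | base => rfl
    | succ k hk ih => exact ((h k _ (ht k.lt_succ_self).le le_rfl).2 i n (hV k hk)).trans ih
  obtain ⟨k, hk, hkγ, hγk⟩ := exists_le_lt_succ_of_lt_iSup ht hK hγ
  exact ((h k γ hkγ hγk.le).2 i n (hV k hk)).trans (hstages k hk)

theorem RunsWithin.iSup (ht : StrictMono t) (h : ∀ k, M.RunsWithin z x (V k) (t k) (t (k + 1)))
    (hVW : ∀ k, V k ⊆ W) : M.RunsWithin z x W (t 0) (⨆ k, t k) := by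
  intro γ h0 hγ
  refine ⟨fun hγ => ?_, fun i n hin => ?_⟩
  · obtain ⟨k, -, hkγ, hγk⟩ := exists_le_lt_succ_of_lt_iSup ht h0 hγ
    exact (h k γ hkγ hγk.le).1 hγk
  · have hconst : ∀ γ, t 0 ≤ γ → γ < ⨆ k, t k →
        (M.snap z x γ).tape i n = (M.snap z x (t 0)).tape i n := fun γ =>
      RunsWithin.tape_eq_of_lt_iSup ht h fun k _ hk => hin (hVW k hk)
    rcases hγ.eq_or_lt with rfl | hγ
    · exact tape_limit_eq_of_forall (isSuccLimit_iSup_of_strictMono ht)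
        (lt_iSup_of_strictMono ht 0) hconst
    · exact hconst γ h0 hγ

/-- A sufficient condition for a cell to have the value `v` at the supremum of a sequence of stages,
where `T k` is its value at the `k`-th of these stages and it is changed between the `k`-th and the
next one only if `C k`. -/
def LimitValue (T : ℕ → Bool) (C : ℕ → Prop) (v : Bool) : Prop :=
  (v = true ∧ ∃ᶠ k in Filter.atTop, T k = true) ∨ ∃ k, T k = v ∧ ∀ l ≥ k, ¬ C l

theorem LimitValue.tape_iSup {v : Bool} (ht : StrictMono t)
    (h : ∀ k, M.RunsWithin z x (V k) (t k) (t (k + 1)))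
    (hv : LimitValue (fun k => (M.snap z x (t k)).tape i n) (fun k => (i, n) ∈ V k) v) :
    (M.snap z x (⨆ k, t k)).tape i n = v := by
  have hlim := isSuccLimit_iSup_of_strictMono ht
  rcases hv with ⟨rfl, hv⟩ | ⟨K, rfl, hK⟩
  · refine tape_limit_eq_true hlim fun β hβ => ?_
    obtain ⟨k, hk⟩ := Ordinal.lt_iSup_iff.1 hβ
    obtain ⟨l, hl, hT⟩ := Filter.frequently_atTop.1 hv k
    exact ⟨t l, hk.le.trans (ht.monotone hl), lt_iSup_of_strictMono ht l, hT⟩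
  · exact tape_limit_eq_of_forall hlim (lt_iSup_of_strictMono ht K) fun γ =>
      RunsWithin.tape_eq_of_lt_iSup ht h hK

end IncreasingStages

/-- Whenever the computation is at the snapshot `s` it later arrives at `t`, without halting in
between and without changing cells outside `V`. -/
def Reaches (M : OMachine) (z x : R) (V : Set (Fin 4 × ℕ)) (s t : OSnapshot M.Q) : Prop :=
  ∀ α, M.snap z x α = s → ∃ β ≥ α, M.snap z x β = t ∧ M.RunsWithin z x V α β

variable {s t u : OSnapshot M.Q}

theorem Reaches.refl (s : OSnapshot M.Q) : M.Reaches z x V s s :=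
  fun α hα => ⟨α, le_rfl, hα, .refl α⟩

theorem Reaches.trans (hst : M.Reaches z x V s t) (htu : M.Reaches z x V t u) :
    M.Reaches z x V s u := by
  intro α hα
  obtain ⟨β, hαβ, hβ, hV⟩ := hst α hα
  obtain ⟨δ, hβδ, hδ, hV'⟩ := htu β hβ
  exact ⟨δ, hαβ.trans hβδ, hδ, hV.trans hV' hαβ⟩

theorem Reaches.mono (h : M.Reaches z x V s t) (hVW : V ⊆ W) : M.Reaches z x W s t := by
  intro α hα
  obtain ⟨β, hαβ, hβ, hV⟩ := h α hα
  exact ⟨β, hαβ, hβ, hV.mono hVW⟩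

theorem Reaches.of_stepSnap (hs : s.state ≠ M.halt) (hst : M.stepSnap s = t)
    (hV : ∀ i n, (i, n) ∉ V → t.tape i n = s.tape i n) : M.Reaches z x V s t := by
  rintro α rfl
  have ht : M.snap z x (α + 1) = t := by rw [snap_succ, hst]
  exact ⟨α + 1, by simp, ht, .add_one hs (by simpa only [ht] using hV)⟩

theorem Reaches.limit {V : ℕ → Set (Fin 4 × ℕ)} {s : ℕ → OSnapshot M.Q} {T : Fin 4 → ℕ → Bool}
    (h : ∀ k, M.Reaches z x (V k) (s k) (s (k + 1))) (hs : ∀ k, s k ≠ s (k + 1))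
    (hVW : ∀ k, V k ⊆ W)
    (hT : ∀ i n, LimitValue (fun k => (s k).tape i n) (fun k => (i, n) ∈ V k) (T i n)) :
    M.Reaches z x W (s 0) ⟨M.limit, 0, T⟩ := by
  intro α hα
  choose! next hle hnext hruns using h
  let t : ℕ → Ordinal := fun k => Nat.rec α next k
  have hsnap : ∀ k, M.snap z x (t k) = s k := fun k => by
    induction k with
    | zero => exact hα
    | succ k ih => exact hnext k _ ih
  have ht : StrictMono t := strictMono_nat_of_lt_succ fun k =>
    lt_of_le_of_ne (hle k _ (hsnap k)) fun h =>
      hs k ((hsnap k).symm.trans ((congrArg _ h).trans (hsnap (k + 1))))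
  have hruns' : ∀ k, M.RunsWithin z x (V k) (t k) (t (k + 1)) := fun k => hruns k _ (hsnap k)
  have hlim := isSuccLimit_iSup_of_strictMono ht
  refine ⟨⨆ k, t k, (lt_iSup_of_strictMono ht 0).le, ?_, .iSup ht hruns' hVW⟩
  have htape : (M.snap z x (⨆ k, t k)).tape = T := by
    funext i n
    exact LimitValue.tape_iSup ht hruns' (by simpa only [hsnap] using hT i n)
  rw [← htape, M.snap_limit z x hlim]

theorem outputs_of_reaches {y : R} (h : M.Reaches z x V (M.init z x) t) (ht : t.state = M.halt)
    (hy : t.tape 2 = y) : M.outputs z x y := by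
  obtain ⟨β, -, hβ, hV⟩ := h 0 (M.snap_zero z x)
  refine ⟨β, ⟨by rw [haltedAt, hβ, ht], fun γ hγ => (hV γ zero_le hγ.le).1 hγ⟩, ?_⟩
  rw [hβ, hy]

end OMachine

namespace TreeSearch

/-- States of the tree searching machine. The argument `ok` records whether the letters read so far
agree with the tapes, `a` and `b` are the two bits of the current letter; the arguments of `scan`
are whether this is the second pass, and the last bit read. -/
inductive St
  | start | limit | halt | clean
  | scan (second prev : Bool) | back | del
  | next₁ | next₂ | next₃
  | toParent | flash | unflash₁ | unflash₂ | toTop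
  | skip₁ | skip₂ | letter (ok : Bool) | readA (ok : Bool) | readB (ok a : Bool)
  | toLeft (ok a b : Bool) | compare (ok a b : Bool) | toRight (ok : Bool) | verdict (ok : Bool)
  deriving Fintype

/-- The transition table. The arguments are the current state and the bits read on the input,
oracle, marker and stack tapes; the values are the next state, the bits written on the marker and
stack tapes, and whether to move right. The machine answers `w` when it finds an infinite branch.

The two bits on cell `0` of the marker and stack tapes tell the limit stages apart: `(1, 0)` after
the initialization, `(0, 1)` after a search, `(0, 0)` after a first pass of `scan` which has not
found a flashed cell, and `(1, 1)` after the final cleaning. -/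
def trans (w : Bool) : St → Bool → Bool → Bool → Bool → St × Bool × Bool × Bool
  | .start, _, _, _, y => (.start, true, y, true)
  | .limit, _, _, true, false => (.next₁, false, true, true)
  | .limit, _, _, false, true => (.scan false true, false, false, true)
  | .limit, _, _, false, false => (.clean, true, true, true)
  | .limit, _, _, true, true => (.halt, true, w, true)
  | .halt, _, _, n, y => (.halt, n, y, true)
  | .clean, _, _, n, _ => (.clean, n, false, true)
  | .scan false true, _, _, n, true => (.back, n, true, false)
  | .scan true true, _, _, n, true => (.del, n, false, false)
  | .scan second _, _, _, n, y => (.scan second y, n, y, true)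
  | .back, _, _, true, y => (.back, true, y, false)
  | .back, _, _, false, _ => (.scan true true, false, true, true)
  | .del, _, _, true, _ => (.next₁, true, false, true)
  | .del, _, _, false, _ => (.halt, false, !w, true)
  | .next₁, _, _, n, y => (.next₂, n, y, true)
  | .next₂, _, _, n, y => (.next₃, n, y, true)
  | .next₃, _, false, n, y => (.next₁, n, y, true)
  | .next₃, _, true, n, _ => (.toParent, n, true, false)
  | .toParent, _, _, n, false => (.toParent, n, false, false)
  | .toParent, _, _, n, true => (.flash, n, true, true)
  | .flash, _, _, n, _ => (.unflash₁, n, true, true)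
  | .unflash₁, _, _, n, y => (.unflash₂, n, y, false)
  | .unflash₂, _, _, n, _ => (.toTop, n, false, true)
  | .toTop, _, _, n, false => (.toTop, n, false, true)
  | .toTop, _, _, _, true => (.skip₁, false, true, true)
  | .skip₁, _, _, n, y => (.skip₂, n, y, true)
  | .skip₂, _, _, n, y => (.letter true, n, y, true)
  | .letter ok, _, false, n, y => (.readA ok, n, y, true)
  | .letter ok, _, true, n, y => (.verdict ok, n, y, false)
  | .readA ok, _, a, n, y => (.readB ok a, n, y, true)
  | .readB ok a, _, b, _, y => (.toLeft ok a b, false, y, false)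
  | .toLeft ok a b, _, _, true, y => (.toLeft ok a b, true, y, false)
  | .toLeft ok a b, _, _, false, y => (.compare ok a b, true, y, false)
  | .compare ok a b, i, _, _, y => (.toRight (ok && (bif a then i else y) == b), false, y, true)
  | .toRight ok, _, _, true, y => (.toRight ok, true, y, true)
  | .toRight ok, _, _, false, y => (.letter ok, true, y, true)
  | .verdict ok, _, _, n, false => (.verdict ok, n, false, false)
  | .verdict ok, _, _, n, true => (.next₁, n, ok, true)

instance : Nonempty St := ⟨.start⟩

/-- A numbering of the states. -/
noncomputable def stEquiv : St ≃ Fin (Fintype.card St - 1 + 1) :=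
  Fintype.equivFinOfCardEq (Nat.succ_pred_eq_of_pos Fintype.card_pos).symm

/-- The tree searching machine: tape `1` is its marker tape and tape `2` its stack tape. -/
noncomputable def machine (w : Bool) : OMachine where
  Q := Fintype.card St - 1
  start := stEquiv .start
  limit := stEquiv .limit
  halt := stEquiv .halt
  trans := fun p =>
    let t := trans w (stEquiv.symm p.1) (p.2 0) (p.2 3) (p.2 1) (p.2 2)
    (stEquiv t.1, ![p.2 0, t.2.1, t.2.2.1], t.2.2.2)

/-- A configuration: the part of a snapshot that changes in the course of the computation. -/
@[ext]
structure Cfg where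
  st : St
  head : ℕ
  marker : ℕ → Bool
  stack : ℕ → Bool

/-- The snapshot given by a configuration, the oracle `z` and the input `x`. -/
noncomputable def Cfg.toSnap (w : Bool) (z x : R) (c : Cfg) : OSnapshot (machine w).Q where
  state := stEquiv c.st
  head := c.head
  tape := ![x, c.marker, c.stack, z]

/-- One step on configurations. -/
def step (w : Bool) (z x : R) (c : Cfg) : Cfg :=
  let t := trans w c.st (x c.head) (z c.head) (c.marker c.head) (c.stack c.head)
  { st := t.1
    head := if t.2.2.2 then c.head + 1 else c.head - 1
    marker := Function.update c.marker c.head t.2.1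
    stack := Function.update c.stack c.head t.2.2.1 }

theorem Cfg.toSnap_injective (w : Bool) (z x : R) : Function.Injective (Cfg.toSnap w z x) := by
  intro c d h
  have htape := congrArg OSnapshot.tape h
  exact Cfg.ext (stEquiv.injective (congrArg OSnapshot.state h)) (congrArg OSnapshot.head h)
    (congrFun htape 1) (congrFun htape 2)

theorem stepSnap_toSnap (w : Bool) (z x : R) (c : Cfg) :
    (machine w).stepSnap (c.toSnap w z x) = (step w z x c).toSnap w z x := by
  have hst : stEquiv.symm (c.toSnap w z x).state = c.st := stEquiv.symm_apply_apply _
  simp only [OMachine.stepSnap, machine, hst]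
  simp only [Cfg.toSnap, step]
  congr 1
  funext i n
  fin_cases i <;> by_cases h : n = c.head <;> simp [h]

theorem init_eq_toSnap (w : Bool) (z x : R) :
    (machine w).init z x = Cfg.toSnap w z x ⟨.start, 0, zeroR, zeroR⟩ := by
  simp only [OMachine.init, Cfg.toSnap, machine]
  congr 1
  funext i n
  fin_cases i <;> rfl

/-- The cells `A` of the marker tape together with the cells `B` of the stack tape. -/
def workCells (A B : Set ℕ) : Set (Fin 4 × ℕ) := {c | c.1 = 1 ∧ c.2 ∈ A ∨ c.1 = 2 ∧ c.2 ∈ B}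

/-- The tree searching machine gets from the configuration `c` to the configuration `d`, only
changing cells in `A` on the marker tape and cells in `B` on the stack tape. -/
def Run (w : Bool) (z x : R) (A B : Set ℕ) (c d : Cfg) : Prop :=
  (machine w).Reaches z x (workCells A B) (c.toSnap w z x) (d.toSnap w z x)

variable {w : Bool} {z x : R} {A A' B B' : Set ℕ} {c d e : Cfg}

theorem Run.refl (c : Cfg) : Run w z x A B c c := OMachine.Reaches.refl _

theorem Run.trans (h : Run w z x A B c d) (h' : Run w z x A B d e) : Run w z x A B c e :=
  OMachine.Reaches.trans h h'

theorem Run.mono (h : Run w z x A B c d) (hA : A ⊆ A') (hB : B ⊆ B') : Run w z x A' B' c d :=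
  OMachine.Reaches.mono h fun _ => Or.imp (And.imp_right (@hA _)) (And.imp_right (@hB _))

instance : Trans (Run w z x A B) (Run w z x A B) (Run w z x A B) := ⟨Run.trans⟩

theorem Run.of_step (hs : step w z x c = d) (hc : c.st ≠ .halt := by simp)
    (hA : d.marker c.head = c.marker c.head ∨ c.head ∈ A := by simp)
    (hB : d.stack c.head = c.stack c.head ∨ c.head ∈ B := by simp) : Run w z x A B c d := by
  subst hs
  refine .of_stepSnap (fun h => hc (stEquiv.injective h)) (stepSnap_toSnap w z x c) ?_
  intro i n hin
  by_cases hn : n = c.head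
  · subst hn
    fin_cases i
    · rfl
    · exact hA.resolve_right fun h => hin (.inl ⟨rfl, h⟩)
    · exact hB.resolve_right fun h => hin (.inr ⟨rfl, h⟩)
    · rfl
  · fin_cases i <;> simp [Cfg.toSnap, step, hn]

theorem Run.scan_right {s : St} {h h' : ℕ} {N Y : ℕ → Bool} (hh : h ≤ h')
    (H : ∀ j, h ≤ j → j < h' → TreeSearch.trans w s (x j) (z j) (N j) (Y j) = (s, N j, Y j, true))
    (hs : s ≠ .halt := by simp) : Run w z x A B ⟨s, h, N, Y⟩ ⟨s, h', N, Y⟩ := by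
  induction h', hh using Nat.le_induction with
  | base => exact .refl _
  | succ k hk ih =>
    refine (ih fun j h1 h2 => H j h1 (h2.trans k.lt_succ_self)).trans ?_
    exact .of_step (by simp [step, H k hk k.lt_succ_self]) hs

theorem Run.scan_left {s : St} {h h' : ℕ} {N Y : ℕ → Bool} (hh : h ≤ h')
    (H : ∀ j, h < j → j ≤ h' → TreeSearch.trans w s (x j) (z j) (N j) (Y j) = (s, N j, Y j, false))
    (hs : s ≠ .halt := by simp) : Run w z x A B ⟨s, h', N, Y⟩ ⟨s, h, N, Y⟩ := by
  induction h', hh using Nat.le_induction with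
  | base => exact .refl _
  | succ k hk ih =>
    refine .trans ?_ (ih fun j h1 h2 => H j h1 (h2.trans k.le_succ))
    exact .of_step (by simp [step, H (k + 1) (Nat.lt_succ_of_le hk) le_rfl]) hs

theorem Run.limit {A B : ℕ → Set ℕ} {c : ℕ → Cfg} {N Y : ℕ → Bool}
    (h : ∀ k, Run w z x (A k) (B k) (c k) (c (k + 1))) (hc : ∀ k, c k ≠ c (k + 1))
    (hA : ∀ k, A k ⊆ A') (hB : ∀ k, B k ⊆ B')
    (hN : ∀ n, OMachine.LimitValue (fun k => (c k).marker n) (fun k => n ∈ A k) (N n))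
    (hY : ∀ n, OMachine.LimitValue (fun k => (c k).stack n) (fun k => n ∈ B k) (Y n)) :
    Run w z x A' B' (c 0) ⟨.limit, 0, N, Y⟩ := by
  refine OMachine.Reaches.limit h (fun k hk => hc k (Cfg.toSnap_injective w z x hk))
    (fun k _ => Or.imp (And.imp_right (@hA k _)) (And.imp_right (@hB k _))) fun i n => ?_
  fin_cases i
  · exact .inr ⟨0, rfl, by simp [workCells]⟩
  · simpa [workCells, Cfg.toSnap] using hN n
  · simpa [workCells, Cfg.toSnap] using hY n
  · exact .inr ⟨0, rfl, by simp [workCells]⟩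

section Layout

/-- The position on the tapes of node number `v`. On the oracle tape it starts the block of `v`,
which ends before `cell (v + 1)`: the bit at `cell v` is `1`, then two bits are skipped, then each
`j < cell v`, in decreasing order, has three bits, of which the first is `0` and the other two form
the letter of `j`. -/
def cell : ℕ → ℕ
  | 0 => 0
  | v + 1 => 4 * cell v + 3

theorem cell_zero : cell 0 = 0 := rfl

theorem cell_succ (v : ℕ) : cell (v + 1) = 4 * cell v + 3 := rfl

theorem strictMono_cell : StrictMono cell := strictMono_nat_of_lt_succ fun v => by
  rw [cell_succ]; omega

theorem three_dvd_cell : ∀ v, 3 ∣ cell v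
  | 0 => dvd_zero 3
  | v + 1 => by have := three_dvd_cell v; rw [cell_succ]; omega

theorem le_cell (v : ℕ) : v ≤ cell v := strictMono_cell.le_apply

theorem lt_cell {v : ℕ} (hv : v ≠ 0) : v < cell v := by
  obtain ⟨v, rfl⟩ := Nat.exists_eq_add_one_of_ne_zero hv
  have := le_cell v
  rw [cell_succ]
  omega

theorem cell_lt_of_lt {u v : ℕ} (h : u < v) : 4 * cell u + 3 ≤ cell v :=
  strictMono_cell.monotone h

theorem cell_pos {u v : ℕ} (h : u < v) : 0 < cell v := by have := cell_lt_of_lt h; omega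

/-- The stack tape `Y` passes the test that the pattern `p` prescribes for node `v` on input `x`:
for each `j < cell v`, the letter `(a, b)` of `j` says that the bit `j` of the input (if `a` is `1`)
or of the stack tape (if `a` is `0`) equals `b`. -/
def Matches (p : ℕ → ℕ → Bool × Bool) (x : R) (Y : ℕ → Bool) (v : ℕ) : Prop :=
  ∀ j < cell v, (bif (p v j).1 then x j else Y j) = (p v j).2

/-- The oracle `z` lists the letters of the pattern `p`. -/
structure Encodes (p : ℕ → ℕ → Bool × Bool) (z : R) : Prop where
  head (v : ℕ) : z (cell v) = true
  not_head {v n : ℕ} : 3 ∣ n → cell v < n → n < cell (v + 1) → z n = false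
  letter {v j k : ℕ} : j < cell v → k + 3 * j = 4 * cell v →
    z (k + 1) = (p v j).1 ∧ z (k + 2) = (p v j).2

theorem eq_of_letter_position_eq {u v k k' i j r s : ℕ} (hi : i < cell u)
    (hk : k + 3 * i = 4 * cell u) (hj : j < cell v) (hk' : k' + 3 * j = 4 * cell v) (hr : r < 3)
    (hs : s < 3) (h : k + r = k' + s) : u = v ∧ i = j ∧ r = s := by
  have hu := three_dvd_cell u
  have hv := three_dvd_cell v
  rcases lt_trichotomy u v with huv | rfl | huv
  · have := cell_lt_of_lt huv; omega
  · omega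
  · have := cell_lt_of_lt huv; omega

theorem exists_encodes (p : ℕ → ℕ → Bool × Bool) : ∃ z, Encodes p z := by
  let z : R := fun n => decide ((∃ v, n = cell v) ∨ ∃ v j k r, j < cell v ∧ k + 3 * j = 4 * cell v ∧
    r ≠ 0 ∧ r < 3 ∧ n = k + r ∧ (if r = 1 then (p v j).1 else (p v j).2) = true)
  have hletter : ∀ {v j k r}, j < cell v → k + 3 * j = 4 * cell v → r ≠ 0 → r < 3 →
      z (k + r) = if r = 1 then (p v j).1 else (p v j).2 := by
    intro v j k r hj hk hr0 hr
    rw [Bool.eq_iff_iff, decide_eq_true_iff]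
    constructor
    · rintro (⟨u, hu⟩ | ⟨u, i, l, s, hi, hl, -, hs, h, hp⟩)
      · have := three_dvd_cell u
        have := three_dvd_cell v
        omega
      · obtain ⟨rfl, rfl, rfl⟩ := eq_of_letter_position_eq hi hl hj hk hs hr h.symm
        exact hp
    · exact fun h => .inr ⟨v, j, k, r, hj, hk, hr0, hr, rfl, h⟩
  refine ⟨z, fun v => decide_eq_true (.inl ⟨v, rfl⟩), fun {v n} hn hvn hnv => decide_eq_false ?_,
    fun hj hk => ⟨hletter hj hk (by simp) (by simp), hletter hj hk (by simp) (by simp)⟩⟩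
  rintro (⟨u, rfl⟩ | ⟨u, j, k, r, -, hk, hr0, hr, rfl, -⟩)
  · have := strictMono_cell.lt_iff_lt.1 hvn
    have := strictMono_cell.lt_iff_lt.1 hnv
    omega
  · have := three_dvd_cell u
    omega

end Layout

section Marks

/-- The marker tape with zeros on the cells `0`, `i` and `j` and ones everywhere else: the zeros
mark the cells to which the machine has to return. -/
def marks (i j : ℕ) : ℕ → Bool := fun n => decide (n ≠ 0 ∧ n ≠ i ∧ n ≠ j)

theorem marks_comm (i j : ℕ) : marks i j = marks j i := by
  funext n; simp only [marks, and_comm (a := n ≠ i)]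

theorem update_marks_false (i j : ℕ) : Function.update (marks i 0) j false = marks i j := by
  grind [marks, Function.update_apply]

theorem update_marks_true {i j : ℕ} (hj : j ≠ 0) (hij : j ≠ i) :
    Function.update (marks i j) j true = marks i 0 := by
  grind [marks, Function.update_apply]

theorem marks_left (i j : ℕ) : marks i j i = false := by simp [marks]

theorem marks_zero (i j : ℕ) : marks i j 0 = false := by simp [marks]

theorem marks_of_ne {i j n : ℕ} (hn : n ≠ 0) (hi : n ≠ i) (hj : n ≠ j) : marks i j n = true := by
  simp [marks, hn, hi, hj]

end Marks

section Stack

/-- The stack tape `Y` holds a set of nodes with least element `0` and greatest element `u`. Of the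
nodes in between only the divisibility of their cells by `3` is recorded: no two of these cells are
adjacent, so that a flashed cell can be recognised. -/
structure Stack (Y : ℕ → Bool) (u : ℕ) : Prop where
  root : Y 0 = true
  top : Y (cell u) = true
  above : ∀ n > cell u, Y n = false
  three_dvd : ∀ n, Y n = true → 3 ∣ n

/-- The stack tape `Y` with the node `v` added. -/
def push (Y : ℕ → Bool) (v : ℕ) : ℕ → Bool := Function.update Y (cell v) true

variable {Y : ℕ → Bool} {u v : ℕ}

theorem Stack.push (hY : Stack Y u) (huv : u < v) : Stack (push Y v) v where
  root := by by_cases h : 0 = cell v <;> simp [TreeSearch.push, hY.root, h]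
  top := by simp [TreeSearch.push]
  above n hn := by
    have := strictMono_cell huv
    simp [TreeSearch.push, hn.ne', hY.above n (this.trans hn)]
  three_dvd n hn := by
    by_cases h : n = cell v
    · exact h ▸ three_dvd_cell v
    · exact hY.three_dvd n (by simpa [TreeSearch.push, h] using hn)

theorem Stack.update_push (hY : Stack Y u) (huv : u < v) (b : Bool) :
    Function.update (TreeSearch.push Y v) (cell v) b = bif b then TreeSearch.push Y v else Y := by
  have : Y (cell v) = false := hY.above _ (strictMono_cell huv)
  cases b <;> simp [TreeSearch.push, this]

/-- The stack tape while the machine at node `u` looks at the possible child `v`: the cell next to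
the top of the stack has been flashed. -/
def flashing (Y : ℕ → Bool) (u v : ℕ) : ℕ → Bool :=
  Function.update (push Y v) (cell u + 1) true

end Stack

section Traces

variable {w : Bool} {z x : R} {p : ℕ → ℕ → Bool × Bool} {S : Set ℕ} {N Y : ℕ → Bool} {u v : ℕ}

local notation:50 c "⟶[" S "]" d:51 => Run w z x {0}ᶜ S c d

theorem run_next₁ (hz : Encodes p z) (v : ℕ) :
    ⟨.next₁, cell v + 1, N, Y⟩ ⟶[S] ⟨.next₃, cell (v + 1), N, Y⟩ := by
  have hpass : ∀ k, cell v + 3 * k + 3 ≤ cell (v + 1) →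
      ⟨.next₁, cell v + 1, N, Y⟩ ⟶[S] ⟨.next₃, cell v + 3 * k + 3, N, Y⟩ := by
    intro k
    induction k with
    | zero =>
      intro _
      calc ⟨.next₁, cell v + 1, N, Y⟩
        _ ⟶[S] ⟨.next₂, cell v + 2, N, Y⟩ := .of_step (by simp [step, TreeSearch.trans])
        _ ⟶[S] ⟨.next₃, cell v + 3, N, Y⟩ := .of_step (by simp [step, TreeSearch.trans])
    | succ k ih =>
      intro hk
      have hhead : z (cell v + 3 * k + 3) = false := by
        refine hz.not_head (v := v) ?_ (by omega) (by omega)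
        have := three_dvd_cell v
        omega
      calc ⟨.next₁, cell v + 1, N, Y⟩
        _ ⟶[S] ⟨.next₃, cell v + 3 * k + 3, N, Y⟩ := ih (by omega)
        _ ⟶[S] ⟨.next₁, cell v + 3 * k + 4, N, Y⟩ :=
          .of_step (by simp [step, TreeSearch.trans, hhead])
        _ ⟶[S] ⟨.next₂, cell v + 3 * k + 5, N, Y⟩ := .of_step (by simp [step, TreeSearch.trans])
        _ ⟶[S] ⟨.next₃, cell v + 3 * k + 6, N, Y⟩ := .of_step (by simp [step, TreeSearch.trans])
  have hv : cell v + 3 * cell v + 3 = cell (v + 1) := by rw [cell_succ]; ring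
  exact hv ▸ hpass (cell v) hv.le

theorem run_flash (hz : Encodes p z) (hY : Stack Y u) (huv : u ≤ v) (hu : cell u + 1 ∈ S)
    (hv : cell (v + 1) ∈ S) :
    ⟨.next₁, cell v + 1, N, Y⟩ ⟶[S] ⟨.unflash₁, cell u + 2, N, flashing Y u (v + 1)⟩ := by
  have hcell := cell_lt_of_lt (Nat.lt_add_one_of_le huv)
  have htop : push Y (v + 1) (cell u) = true := by
    rw [push, Function.update_of_ne (by omega), hY.top]
  have hgap : ∀ j, cell u < j → j < cell (v + 1) → push Y (v + 1) j = false := fun j h₁ h₂ => by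
    rw [push, Function.update_of_ne h₂.ne, hY.above j h₁]
  calc ⟨.next₁, cell v + 1, N, Y⟩
    _ ⟶[S] ⟨.next₃, cell (v + 1), N, Y⟩ := run_next₁ hz v
    _ ⟶[S] ⟨.toParent, cell (v + 1) - 1, N, push Y (v + 1)⟩ :=
      .of_step (by simp [step, TreeSearch.trans, hz.head, push]) (hB := .inr hv)
    _ ⟶[S] ⟨.toParent, cell u, N, push Y (v + 1)⟩ :=
      .scan_left (by omega) fun j h₁ h₂ => by
        simp [TreeSearch.trans, hgap j h₁ (by omega)]
    _ ⟶[S] ⟨.flash, cell u + 1, N, push Y (v + 1)⟩ :=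
      .of_step (by simp [step, TreeSearch.trans, htop])
    _ ⟶[S] ⟨.unflash₁, cell u + 2, N, flashing Y u (v + 1)⟩ :=
      .of_step (by simp [step, TreeSearch.trans, flashing]) (hB := .inr hu)

theorem run_unflash₁ (hY : Stack Y u) (huv : u < v) (hu : cell u + 1 ∈ S) :
    ⟨.unflash₁, cell u + 2, marks 0 0, flashing Y u v⟩ ⟶[S]
      ⟨.letter true, cell v + 3, marks 0 (cell v), push Y v⟩ := by
  have hcell := cell_lt_of_lt huv
  have hgap : ∀ j, cell u < j → j < cell v → push Y v j = false := fun j h₁ h₂ => by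
    rw [push, Function.update_of_ne h₂.ne, hY.above j h₁]
  have hunflash : Function.update (flashing Y u v) (cell u + 1) false = push Y v := by
    simp [flashing, hgap (cell u + 1) (by omega) (by omega)]
  calc ⟨.unflash₁, cell u + 2, marks 0 0, flashing Y u v⟩
    _ ⟶[S] ⟨.unflash₂, cell u + 1, marks 0 0, flashing Y u v⟩ :=
      .of_step (by simp [step, TreeSearch.trans])
    _ ⟶[S] ⟨.toTop, cell u + 2, marks 0 0, push Y v⟩ :=
      .of_step (by simp [step, TreeSearch.trans, hunflash]) (hB := .inr hu)
    _ ⟶[S] ⟨.toTop, cell v, marks 0 0, push Y v⟩ :=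
      .scan_right (by omega) fun j h₁ h₂ => by
        simp [TreeSearch.trans, hgap j (by omega) h₂]
    _ ⟶[S] ⟨.skip₁, cell v + 1, marks 0 (cell v), push Y v⟩ :=
      .of_step (by simp [step, TreeSearch.trans, (hY.push huv).top, update_marks_false])
        (hA := .inr (cell_pos huv).ne')
    _ ⟶[S] ⟨.skip₂, cell v + 2, marks 0 (cell v), push Y v⟩ :=
      .of_step (by simp [step, TreeSearch.trans])
    _ ⟶[S] ⟨.letter true, cell v + 3, marks 0 (cell v), push Y v⟩ :=
      .of_step (by simp [step, TreeSearch.trans])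

theorem run_letter {a b ok : Bool} {m k : ℕ} (hmk : m < k) (hk : z k = false) (ha : z (k + 1) = a)
    (hb : z (k + 2) = b) :
    ⟨.letter ok, k, marks 0 (m + 1), Y⟩ ⟶[S]
      ⟨.letter (ok && (bif a then x m else Y m) == b), k + 3, marks 0 m, Y⟩ := by
  calc ⟨.letter ok, k, marks 0 (m + 1), Y⟩
    _ ⟶[S] ⟨.readA ok, k + 1, marks 0 (m + 1), Y⟩ := .of_step (by simp [step, TreeSearch.trans, hk])
    _ ⟶[S] ⟨.readB ok a, k + 2, marks 0 (m + 1), Y⟩ :=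
      .of_step (by simp [step, TreeSearch.trans, ha])
    _ ⟶[S] ⟨.toLeft ok a b, k + 1, marks (m + 1) (k + 2), Y⟩ :=
      .of_step (by simp [step, TreeSearch.trans, hb, marks_comm 0, update_marks_false])
        (hA := .inr (by simp))
    _ ⟶[S] ⟨.toLeft ok a b, m + 1, marks (m + 1) (k + 2), Y⟩ :=
      .scan_left (by omega) fun j h₁ h₂ => by
        simp [TreeSearch.trans, marks_of_ne (i := m + 1) (j := k + 2) (n := j) (by omega) (by omega)
          (by omega)]
    _ ⟶[S] ⟨.compare ok a b, m, marks (k + 2) 0, Y⟩ :=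
      .of_step (by
        simp [step, TreeSearch.trans, marks_left, marks_comm (m + 1),
          update_marks_true (i := k + 2) (j := m + 1) (by omega) (by omega)])
        (hA := .inr (by simp))
    _ ⟶[S] ⟨.toRight (ok && (bif a then x m else Y m) == b), m + 1, marks (k + 2) m, Y⟩ :=
      .of_step (by simp [step, TreeSearch.trans, update_marks_false]) (hA := by
        rcases eq_or_ne m 0 with rfl | hm
        · exact .inl (by simp [marks_zero])
        · exact .inr hm)
    _ ⟶[S] ⟨.toRight (ok && (bif a then x m else Y m) == b), k + 2, marks (k + 2) m, Y⟩ :=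
      .scan_right (by omega) fun j h₁ h₂ => by
        simp [TreeSearch.trans, marks_of_ne (i := k + 2) (j := m) (n := j) (by omega) (by omega)
          (by omega)]
    _ ⟶[S] ⟨.letter (ok && (bif a then x m else Y m) == b), k + 3, marks 0 m, Y⟩ :=
      .of_step (by
        simp [step, TreeSearch.trans, marks_left, marks_comm _ m,
          update_marks_true (i := m) (j := k + 2) (by omega) (by omega)])
        (hA := .inr (by simp))

theorem run_letters (hz : Encodes p z) {ok : Bool} {m k : ℕ} (hm : m ≤ cell v)
    (hk : k + 3 * m = 4 * cell v + 3) :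
    ⟨.letter ok, k, marks 0 m, Y⟩ ⟶[S]
      ⟨.letter (ok && decide (∀ j < m, (bif (p v j).1 then x j else Y j) = (p v j).2)),
        cell (v + 1), marks 0 0, Y⟩ := by
  induction m generalizing ok k with
  | zero => simpa [cell_succ, ← hk] using Run.refl _
  | succ m ih =>
    have hcell := three_dvd_cell v
    have hhead : z k = false := hz.not_head (v := v) (by omega) (by omega) (by
      rw [cell_succ]; omega)
    obtain ⟨ha, hb⟩ := hz.letter (k := k) hm (by omega)
    refine (run_letter (by omega) hhead ha hb).trans ?_
    convert ih (k := k + 3) (by omega) (by omega) using 3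
    simp only [Bool.and_assoc, Nat.forall_lt_succ_right, Bool.decide_and, Bool.beq_eq_decide_eq]
    rw [Bool.and_comm (decide _)]

theorem run_verdict (hz : Encodes p z) (hY : Stack Y v) (hv : cell v ∈ S) {ok : Bool} :
    ⟨.letter ok, cell (v + 1), N, Y⟩ ⟶[S]
      ⟨.next₁, cell v + 1, N, Function.update Y (cell v) ok⟩ := by
  have hcell := cell_succ v
  calc ⟨.letter ok, cell (v + 1), N, Y⟩
    _ ⟶[S] ⟨.verdict ok, cell (v + 1) - 1, N, Y⟩ :=
      .of_step (by simp [step, TreeSearch.trans, hz.head])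
    _ ⟶[S] ⟨.verdict ok, cell v, N, Y⟩ :=
      .scan_left (by omega) fun j h₁ _ => by simp [TreeSearch.trans, hY.above j h₁]
    _ ⟶[S] ⟨.next₁, cell v + 1, N, Function.update Y (cell v) ok⟩ :=
      .of_step (by simp [step, TreeSearch.trans, hY.top]) (hB := .inr hv)

theorem run_test (hz : Encodes p z) (hY : Stack Y u) (huv : u < v) (hu : cell u + 1 ∈ S)
    (hv : cell v ∈ S) :
    ⟨.unflash₁, cell u + 2, marks 0 0, flashing Y u v⟩ ⟶[S]
      ⟨.next₁, cell v + 1, marks 0 0, bif decide (Matches p x (push Y v) v) then push Y v else Y⟩ :=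
  calc ⟨.unflash₁, cell u + 2, marks 0 0, flashing Y u v⟩
    _ ⟶[S] ⟨.letter true, cell v + 3, marks 0 (cell v), push Y v⟩ := run_unflash₁ hY huv hu
    _ ⟶[S] ⟨.letter (decide (Matches p x (push Y v) v)), cell (v + 1), marks 0 0, push Y v⟩ := by
      convert run_letters (v := v) (k := cell v + 3) hz (ok := true) le_rfl (by omega) using 3
      exact (decide_eq_decide.2 Iff.rfl).trans (Bool.true_and _).symm
    _ ⟶[S] _ := hY.update_push huv _ ▸ run_verdict hz (hY.push huv) hv

end Traces

section Scan

variable {w : Bool} {z x : R} {A B : Set ℕ} {N P Y : ℕ → Bool} {u h : ℕ}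

theorem run_scan_right {second : Bool} (hP : ∀ j < h, ¬ (P j = true ∧ P (j + 1) = true))
    (hPY : ∀ j ≠ 0, P j = Y j) :
    Run w z x A B ⟨.scan second (P 0), 1, N, Y⟩ ⟨.scan second (P h), h + 1, N, Y⟩ := by
  induction h with
  | zero => exact .refl _
  | succ h ih =>
    refine (ih fun j hj => hP j (hj.trans h.lt_succ_self)).trans (.of_step ?_)
    have hpair := hP h h.lt_succ_self
    cases hprev : P h <;> cases hbit : P (h + 1) <;> cases second <;>
      simp_all [step, TreeSearch.trans]

local notation:50 c "⟶[" S "]" d:51 => Run w z x {0}ᶜ S c d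

theorem not_adjacent_of_three_dvd {j : ℕ} (hY : ∀ n, Y n = true → 3 ∣ n) :
    ¬ (Y j = true ∧ Y (j + 1) = true) := fun h => by
  have h₁ := hY j h.1
  have h₂ := hY (j + 1) h.2
  omega

/-- At the end of the search below `u` the flashed cell next to `cell u` is still `1`; it shows the
machine where the stack ends. -/
theorem run_pop {S : Set ℕ} (hY : Stack Y u) (h0 : 0 ∈ S) (hu : cell u + 1 ∈ S) :
    ⟨.limit, 0, marks 0 0, Function.update Y (cell u + 1) true⟩ ⟶[S]
      ⟨.del, cell u, marks 0 0, Y⟩ := by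
  set F := Function.update Y (cell u + 1) true
  have hF0 : F 0 = true := by simp [F, hY.root]
  have hFu : F (cell u) = true := by simp [F, hY.top]
  have hFu' : F (cell u + 1) = true := by simp [F]
  have hFY : Function.update F (cell u + 1) false = Y := by
    simp [F, hY.above (cell u + 1) (Nat.lt_succ_self _)]
  have hnot : ∀ j < cell u, ¬ (F j = true ∧ F (j + 1) = true) := fun j hj => by
    simpa [F, Function.update_of_ne (show j ≠ cell u + 1 by omega), hj.ne] using
      not_adjacent_of_three_dvd hY.three_dvd (j := j)
  calc ⟨.limit, 0, marks 0 0, F⟩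
    _ ⟶[S] ⟨.scan false (F 0), 1, marks 0 0, Function.update F 0 false⟩ :=
      .of_step (by simp [step, TreeSearch.trans, marks_zero, hF0]) (hB := .inr h0)
    _ ⟶[S] ⟨.scan false (F (cell u)), cell u + 1, marks 0 0, Function.update F 0 false⟩ :=
      run_scan_right hnot fun j hj => by simp [hj]
    _ ⟶[S] ⟨.back, cell u, marks 0 0, Function.update F 0 false⟩ :=
      .of_step (by simp [step, TreeSearch.trans, hFu, hFu'])
    _ ⟶[S] ⟨.back, 0, marks 0 0, Function.update F 0 false⟩ :=
      .scan_left zero_le fun j h₁ _ => by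
        simp [TreeSearch.trans, marks_of_ne (i := 0) (j := 0) h₁.ne' h₁.ne' h₁.ne']
    _ ⟶[S] ⟨.scan true (F 0), 1, marks 0 0, F⟩ :=
      .of_step (by simp [step, TreeSearch.trans, marks_zero, hF0]) (hB := .inr h0)
    _ ⟶[S] ⟨.scan true (F (cell u)), cell u + 1, marks 0 0, F⟩ :=
      run_scan_right hnot fun _ _ => rfl
    _ ⟶[S] ⟨.del, cell u, marks 0 0, Y⟩ :=
      .of_step (by simp [step, TreeSearch.trans, hFu, hFu', hFY]) (hB := .inr hu)

theorem run_scan_limit (hP : ∀ j, ¬ (P j = true ∧ P (j + 1) = true)) (hPY : ∀ j ≠ 0, P j = Y j) :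
    Run w z x A B ⟨.scan false (P 0), 1, N, Y⟩ ⟨.limit, 0, N, Y⟩ := by
  refine Run.limit (A := fun _ => ∅) (B := fun _ => ∅)
    (c := fun k => ⟨.scan false (P k), k + 1, N, Y⟩) (fun k => ?_) (by simp) (by simp) (by simp)
    (fun n => .inr ⟨0, rfl, by simp⟩) (fun n => .inr ⟨0, rfl, by simp⟩)
  refine .of_step ?_
  have hpair := hP k
  cases hprev : P k <;> cases hbit : P (k + 1) <;> simp_all [step, TreeSearch.trans]

end Scan

section Phases

variable {w : Bool} {z x : R} {N Y : ℕ → Bool}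

/-- The stack tape holding the root only. -/
def rootStack : ℕ → Bool := Function.update zeroR 0 true

theorem stack_rootStack : Stack rootStack 0 where
  root := rfl
  top := rfl
  above n hn := Function.update_of_ne (Nat.ne_zero_of_lt hn) _ _
  three_dvd n hn := by
    by_contra h
    have hn0 : n ≠ 0 := fun h0 => h (h0 ▸ dvd_zero 3)
    simp [rootStack, zeroR, hn0] at hn

theorem run_start :
    Run w z x Set.univ Set.univ ⟨.start, 0, zeroR, zeroR⟩ ⟨.next₁, 1, marks 0 0, rootStack⟩ := by
  have hfill : Run w z x Set.univ Set.univ ⟨.start, 0, zeroR, zeroR⟩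
      ⟨.limit, 0, fun _ => true, zeroR⟩ := by
    have hzero : zeroR = fun n => decide (n < 0) := by simp [zeroR, funext_iff]
    conv_lhs => rw [hzero]
    refine Run.limit (A := fun k => {k}) (B := fun _ => ∅)
      (c := fun k => ⟨.start, k, fun n => decide (n < k), zeroR⟩) (fun k => .of_step ?_)
      (by simp) (by simp) (by simp) (fun n => .inr ⟨n + 1, by simp, fun l hl => ?_⟩)
      (fun n => .inr ⟨0, rfl, by simp⟩)
    · simp only [step, TreeSearch.trans, Function.update_eq_self, Cfg.mk.injEq, true_and, and_true]
      grind [Function.update_apply]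
    · exact (Nat.lt_of_succ_le hl).ne
  refine hfill.trans (.of_step ?_)
  simp only [step, TreeSearch.trans, zeroR, Cfg.mk.injEq, true_and, rootStack]
  grind [marks, Function.update_apply]

theorem run_clean (hY : Y 0 = true) :
    Run w z x Set.univ Set.univ ⟨.clean, 1, N, Y⟩ ⟨.limit, 0, N, rootStack⟩ := by
  have hstart : Y = fun n => decide (n = 0 ∨ 0 < n) && Y n := by
    funext n; simp [Nat.eq_zero_or_pos]
  conv_lhs => rw [hstart]
  refine Run.limit (A := fun _ => ∅) (B := fun k => {k + 1})
    (c := fun k => ⟨.clean, k + 1, N, fun n => decide (n = 0 ∨ k < n) && Y n⟩)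
    (fun k => .of_step ?_) (by simp) (by simp) (by simp)
    (fun n => .inr ⟨0, rfl, by simp⟩) (fun n => .inr ⟨n, ?_, fun l hl => ?_⟩)
  · simp only [step, TreeSearch.trans, Function.update_eq_self, Cfg.mk.injEq, true_and]
    grind [Function.update_apply]
  · by_cases hn : n = 0
    · simp [rootStack, hn, hY]
    · simp [rootStack, zeroR, hn]
  · exact (Nat.lt_succ_of_le hl).ne

theorem run_accept (hY0 : Y 0 = true) (hY : ∀ n, Y n = true → 3 ∣ n) :
    ∃ N', Run w z x Set.univ Set.univ ⟨.limit, 0, marks 0 0, Y⟩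
      ⟨.halt, 1, N', Function.update zeroR 0 w⟩ := by
  refine ⟨Function.update (marks 0 0) 0 true, ?_⟩
  calc Run w z x Set.univ Set.univ ⟨.limit, 0, marks 0 0, Y⟩
        ⟨.scan false (Y 0), 1, marks 0 0, Function.update Y 0 false⟩ :=
      .of_step (by simp [step, TreeSearch.trans, marks_zero, hY0])
    Run w z x Set.univ Set.univ _ ⟨.limit, 0, marks 0 0, Function.update Y 0 false⟩ :=
      run_scan_limit (fun j => not_adjacent_of_three_dvd hY) fun j hj => by simp [hj]
    Run w z x Set.univ Set.univ _ ⟨.clean, 1, Function.update (marks 0 0) 0 true, Y⟩ :=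
      .of_step (by simp [step, TreeSearch.trans, marks_zero, hY0])
    Run w z x Set.univ Set.univ _ ⟨.limit, 0, Function.update (marks 0 0) 0 true, rootStack⟩ :=
      run_clean hY0
    Run w z x Set.univ Set.univ _ ⟨.halt, 1, _, Function.update zeroR 0 w⟩ :=
      .of_step (by simp [step, TreeSearch.trans, rootStack])

theorem outputs_of_run {k : ℕ} {N' Y' : ℕ → Bool}
    (h : Run w z x Set.univ Set.univ ⟨.start, 0, zeroR, zeroR⟩ ⟨.halt, k, N', Y'⟩) :
    (machine w).outputs z x Y' :=
  OMachine.outputs_of_reaches (by rw [init_eq_toSnap]; exact h) rfl rfl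

end Phases

section Search

variable {w : Bool} {z x : R} {p : ℕ → ℕ → Bool × Bool} {S : Set ℕ} {Y : ℕ → Bool} {u v : ℕ}
  {a : ℕ × (ℕ → Bool)}

local notation:50 c "⟶[" S "]" d:51 => Run w z x {0}ᶜ S c d

/-- The child relation of the tree searched with pattern `p` on input `x`. A node of this tree is a
number together with the stack tape holding the branch up to this number. -/
def Child (p : ℕ → ℕ → Bool × Bool) (x : R) (b a : ℕ × (ℕ → Bool)) : Prop :=
  a.1 < b.1 ∧ b.2 = push a.2 b.1 ∧ Matches p x b.2 b.1

theorem Child.stack {b : ℕ × (ℕ → Bool)} (h : Child p x b a) (ha : Stack a.2 a.1) :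
    Stack b.2 b.1 :=
  h.2.1 ▸ ha.push h.1

/-- The cell `0`, which tells limit stages apart, and the cells beyond that of `u`. -/
def beyond (u : ℕ) : Set ℕ := {n | n = 0 ∨ cell u < n}

/-- The search below the node `a` ends by discarding `a`. -/
def Fails (w : Bool) (z x : R) (a : ℕ × (ℕ → Bool)) : Prop :=
  Run w z x {0}ᶜ (beyond a.1) ⟨.next₁, cell a.1 + 1, marks 0 0, a.2⟩
    ⟨.del, cell a.1, marks 0 0, a.2⟩

/-- The cells of the stack tape which change when node `u` looks at its possible child `v`. -/
def touched (u v : ℕ) : Set ℕ := {n | n = 0 ∨ n = cell u + 1 ∨ cell v ≤ n}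

theorem touched_subset_beyond (huv : u < v) : touched u v ⊆ beyond u := by
  rintro n (h | h | h)
  · exact .inl h
  · exact .inr (by omega)
  · exact .inr ((strictMono_cell huv).trans_le h)

theorem beyond_subset_touched : beyond v ⊆ touched u v := fun _ => Or.imp_right fun h => .inr h.le

theorem run_skip (hz : Encodes p z) (hY : Stack Y u) (huv : u < v)
    (hfail : Child p x (v, push Y v) (u, Y) → Fails w z x (v, push Y v)) :
    ⟨.unflash₁, cell u + 2, marks 0 0, flashing Y u v⟩ ⟶[touched u v]
      ⟨.next₁, cell v + 1, marks 0 0, Y⟩ := by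
  have htest := run_test (w := w) (x := x) (S := touched u v) hz hY huv (.inr (.inl rfl))
    (.inr (.inr le_rfl))
  by_cases hmatch : Matches p x (push Y v) v
  · rw [decide_eq_true hmatch, cond_true] at htest
    have hv := (cell_pos huv).ne'
    calc ⟨.unflash₁, cell u + 2, marks 0 0, flashing Y u v⟩
      _ ⟶[touched u v] ⟨.next₁, cell v + 1, marks 0 0, push Y v⟩ := htest
      _ ⟶[touched u v] ⟨.del, cell v, marks 0 0, push Y v⟩ :=
        (hfail ⟨huv, rfl, hmatch⟩).mono le_rfl beyond_subset_touched
      _ ⟶[touched u v] ⟨.next₁, cell v + 1, marks 0 0, Y⟩ :=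
        .of_step (by simp [step, TreeSearch.trans, marks_of_ne hv hv hv, hY.update_push huv])
          (hB := .inr (.inr (.inr le_rfl)))
  · rwa [decide_eq_false hmatch, cond_false] at htest

theorem run_pass (hz : Encodes p z) (hY : Stack Y u) (huv : u ≤ v)
    (hfail : ∀ v', v' ≤ v → Child p x (v', push Y v') (u, Y) → Fails w z x (v', push Y v')) :
    ⟨.next₁, cell u + 1, marks 0 0, Y⟩ ⟶[beyond u] ⟨.next₁, cell v + 1, marks 0 0, Y⟩ := by
  induction v, huv using Nat.le_induction with
  | base => exact .refl _
  | succ v huv ih =>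
    have huv' : u < v + 1 := Nat.lt_succ_of_le huv
    calc ⟨.next₁, cell u + 1, marks 0 0, Y⟩
      _ ⟶[beyond u] ⟨.next₁, cell v + 1, marks 0 0, Y⟩ :=
        ih fun v' hv' => hfail v' (hv'.trans v.le_succ)
      _ ⟶[beyond u] ⟨.unflash₁, cell u + 2, marks 0 0, flashing Y u (v + 1)⟩ :=
        run_flash hz hY huv (.inr (Nat.lt_succ_self _)) (.inr (strictMono_cell huv'))
      _ ⟶[beyond u] ⟨.next₁, cell (v + 1) + 1, marks 0 0, Y⟩ :=
        (run_skip hz hY huv' (hfail _ le_rfl)).mono le_rfl (touched_subset_beyond huv')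

theorem run_child (hz : Encodes p z) (hY : Stack Y u) (hv : Child p x (v, push Y v) (u, Y))
    (hfail : ∀ v' < v, Child p x (v', push Y v') (u, Y) → Fails w z x (v', push Y v')) :
    ⟨.next₁, cell u + 1, marks 0 0, Y⟩ ⟶[beyond u] ⟨.next₁, cell v + 1, marks 0 0, push Y v⟩ := by
  obtain ⟨huv, -, hmatch⟩ := hv
  obtain ⟨v, rfl⟩ : ∃ v', v = v' + 1 := Nat.exists_eq_add_one_of_ne_zero (Nat.ne_zero_of_lt huv)
  have hu : cell u + 1 ∈ beyond u := .inr (Nat.lt_succ_self _)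
  have hv : cell (v + 1) ∈ beyond u := .inr (strictMono_cell huv)
  calc ⟨.next₁, cell u + 1, marks 0 0, Y⟩
    _ ⟶[beyond u] ⟨.next₁, cell v + 1, marks 0 0, Y⟩ :=
      run_pass hz hY (Nat.lt_succ_iff.1 huv) fun v' hv' => hfail v' (Nat.lt_succ_of_le hv')
    _ ⟶[beyond u] ⟨.unflash₁, cell u + 2, marks 0 0, flashing Y u (v + 1)⟩ :=
      run_flash hz hY (Nat.lt_succ_iff.1 huv) hu hv
    _ ⟶[beyond u] ⟨.next₁, cell (v + 1) + 1, marks 0 0, push Y (v + 1)⟩ := by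
      simpa only [decide_eq_true hmatch, cond_true] using run_test (x := x) hz hY huv hu hv

theorem limitValue_marks (n : ℕ) :
    OMachine.LimitValue (fun _ => marks 0 0 n) (fun _ => n ∈ ({0}ᶜ : Set ℕ)) (marks 0 0 n) := by
  rcases eq_or_ne n 0 with rfl | hn
  · exact .inr ⟨0, rfl, by simp⟩
  · exact .inl ⟨marks_of_ne hn hn hn, .of_forall fun _ => marks_of_ne hn hn hn⟩

theorem flashing_ne_flashing (hY : Stack Y u) {v' : ℕ} (huv : u < v) (hv : v < v') :
    flashing Y u v ≠ flashing Y u v' := by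
  intro h
  have hcell := cell_lt_of_lt hv
  have huv' := cell_lt_of_lt huv
  have htop := congrFun h (cell v')
  rw [flashing, flashing, Function.update_of_ne (by omega), Function.update_of_ne (by omega),
    push, push, Function.update_of_ne (by omega), Function.update_self,
    hY.above _ (by omega)] at htop
  exact Bool.false_ne_true htop

theorem limitValue_flashing (hY : Stack Y u) (n : ℕ) :
    OMachine.LimitValue (fun k => flashing Y u (u + k + 1) n) (fun k => n ∈ touched u (u + k + 1))
      (Function.update Y (cell u + 1) true n) := by
  by_cases hn : n = cell u + 1
  · exact .inl ⟨by simp [hn], .of_forall fun _ => by simp [hn, flashing]⟩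
  by_cases hn0 : n = 0
  · exact .inl ⟨by simp [hn0, hY.root], .of_forall fun k => by
      simpa [hn0, flashing] using (hY.push (show u < u + k + 1 by omega)).root⟩
  have hcell (k : ℕ) (hk : n ≤ k) : n < cell (u + k + 1) := by
    have := le_cell (u + k + 1)
    omega
  refine .inr ⟨n, by simp [flashing, push, hn, (hcell n le_rfl).ne], fun k hk => ?_⟩
  rintro (h | h | h)
  · exact hn0 h
  · exact hn h
  · exact h.not_gt (hcell k hk)

theorem fails_of_forall_child (hz : Encodes p z) (hY : Stack Y u)
    (hfail : ∀ v, Child p x (v, push Y v) (u, Y) → Fails w z x (v, push Y v)) :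
    Fails w z x (u, Y) := by
  have hu : cell u + 1 ∈ beyond u := .inr (Nat.lt_succ_self _)
  have hlt (k : ℕ) : u < u + k + 1 := by omega
  calc ⟨.next₁, cell u + 1, marks 0 0, Y⟩
    _ ⟶[beyond u] ⟨.unflash₁, cell u + 2, marks 0 0, flashing Y u (u + 0 + 1)⟩ :=
      run_flash hz hY le_rfl hu (.inr (strictMono_cell (hlt 0)))
    _ ⟶[beyond u] ⟨.limit, 0, marks 0 0, Function.update Y (cell u + 1) true⟩ := by
      refine Run.limit (A := fun _ => {0}ᶜ) (B := fun k => touched u (u + k + 1))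
        (c := fun k => ⟨.unflash₁, cell u + 2, marks 0 0, flashing Y u (u + k + 1)⟩)
        (fun k => ?_) (fun k => ?_) (fun _ => le_rfl) (fun k => touched_subset_beyond (hlt k))
        limitValue_marks (fun n => ?_)
      · refine (run_skip hz hY (hlt k) (hfail _)).trans ?_
        refine run_flash hz hY (hlt k).le (.inr (.inl rfl)) (.inr (.inr ?_))
        exact (strictMono_cell (Nat.lt_succ_self _)).le
      · exact fun h => flashing_ne_flashing hY (hlt k) (Nat.lt_succ_self _) (congrArg Cfg.stack h)
      · exact limitValue_flashing hY n
    _ ⟶[beyond u] ⟨.del, cell u, marks 0 0, Y⟩ := run_pop hY (.inl rfl) hu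

theorem fails_of_acc (hz : Encodes p z) (ha : Acc (Child p x) a) (hs : Stack a.2 a.1) :
    Fails w z x a := by
  induction ha with
  | intro a _ ih => exact fails_of_forall_child hz hs fun v hv => ih _ hv (hv.stack hs)

theorem exists_run_child_of_not_acc (hz : Encodes p z) (ha : ¬ Acc (Child p x) a)
    (hs : Stack a.2 a.1) :
    ∃ b, Child p x b a ∧ ¬ Acc (Child p x) b ∧
      ⟨.next₁, cell a.1 + 1, marks 0 0, a.2⟩ ⟶[beyond a.1]
        ⟨.next₁, cell b.1 + 1, marks 0 0, b.2⟩ := by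
  have hex : ∃ v, Child p x (v, push a.2 v) a ∧ ¬ Acc (Child p x) (v, push a.2 v) := by
    by_contra! H
    exact ha ⟨_, fun b hb => by
      obtain ⟨v, Y⟩ := b
      obtain rfl : Y = push a.2 v := hb.2.1
      exact H v hb⟩
  obtain ⟨hchild, hacc⟩ := Nat.find_spec hex
  refine ⟨_, hchild, hacc, run_child hz hs hchild fun v hv hv' => ?_⟩
  exact fails_of_acc hz (not_not.1 fun h => Nat.find_min hex hv ⟨hv', h⟩) (hv'.stack hs)

theorem exists_run_sequence_of_not_acc (hz : Encodes p z) (ha : ¬ Acc (Child p x) a)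
    (hs : Stack a.2 a.1) :
    ∃ b : ℕ → ℕ × (ℕ → Bool), b 0 = a ∧ ∀ k, Stack (b k).2 (b k).1 ∧ Child p x (b (k + 1)) (b k) ∧
      ⟨.next₁, cell (b k).1 + 1, marks 0 0, (b k).2⟩ ⟶[beyond (b k).1]
        ⟨.next₁, cell (b (k + 1)).1 + 1, marks 0 0, (b (k + 1)).2⟩ := by
  choose! next hchild hacc hrun using fun a (h : ¬ Acc (Child p x) a ∧ Stack a.2 a.1) =>
    exists_run_child_of_not_acc (w := w) hz h.1 h.2
  let b : ℕ → ℕ × (ℕ → Bool) := fun k => Nat.rec a (fun _ => next) k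
  have hb (k : ℕ) : ¬ Acc (Child p x) (b k) ∧ Stack (b k).2 (b k).1 := by
    induction k with
    | zero => exact ⟨ha, hs⟩
    | succ k ih => exact ⟨hacc _ ih, (hchild _ ih).stack ih.2⟩
  exact ⟨b, rfl, fun k => ⟨(hb k).2, hchild _ (hb k), hrun _ (hb k)⟩⟩

theorem run_branch (hz : Encodes p z) (ha : ¬ Acc (Child p x) a) (hs : Stack a.2 a.1) :
    ∃ Y', Y' 0 = true ∧ (∀ n, Y' n = true → 3 ∣ n) ∧
      ⟨.next₁, cell a.1 + 1, marks 0 0, a.2⟩ ⟶[beyond a.1] ⟨.limit, 0, marks 0 0, Y'⟩ := by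
  obtain ⟨b, rfl, hb⟩ := exists_run_sequence_of_not_acc (w := w) hz ha hs
  have hlt : StrictMono fun k => (b k).1 := strictMono_nat_of_lt_succ fun k => (hb k).2.1.1
  refine ⟨fun n => (b n).2 n, (hb 0).1.root, fun n => (hb n).1.three_dvd n,
    Run.limit (A := fun _ => {0}ᶜ) (B := fun k => beyond (b k).1)
      (c := fun k => ⟨.next₁, cell (b k).1 + 1, marks 0 0, (b k).2⟩) (fun k => (hb k).2.2)
      (fun k h => ?_) (fun _ => le_rfl) (fun k => ?_) limitValue_marks (fun n => ?_)⟩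
  · have := strictMono_cell (hb k).2.1.1
    exact this.ne (Nat.succ_injective (congrArg Cfg.head h))
  · exact fun n => Or.imp_right (strictMono_cell.monotone (hlt.monotone k.zero_le)).trans_lt
  · rcases eq_or_ne n 0 with rfl | hn
    · exact .inl ⟨(hb 0).1.root, .of_forall fun k => (hb k).1.root⟩
    · refine .inr ⟨n, rfl, fun k hk => ?_⟩
      rintro (h | h)
      · exact hn h
      · exact h.not_ge ((hk.trans hlt.le_apply).trans (le_cell _))

theorem machine_outputs_of_acc (hz : Encodes p z) (hacc : Acc (Child p x) (0, rootStack)) :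
    (machine w).outputs z x (Function.update zeroR 0 !w) := by
  have hfails : Fails w z x (0, rootStack) := fails_of_acc hz hacc stack_rootStack
  refine outputs_of_run (k := 1) (N' := marks 0 0) ?_
  calc Run w z x Set.univ Set.univ ⟨.start, 0, zeroR, zeroR⟩ ⟨.next₁, 1, marks 0 0, rootStack⟩ :=
      run_start
    Run w z x Set.univ Set.univ _ ⟨.del, 0, marks 0 0, rootStack⟩ :=
      hfails.mono (Set.subset_univ _) (Set.subset_univ _)
    Run w z x Set.univ Set.univ _ ⟨.halt, 1, marks 0 0, Function.update zeroR 0 !w⟩ :=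
      .of_step (by simp [step, TreeSearch.trans, marks_zero, rootStack])

theorem machine_outputs_of_not_acc (hz : Encodes p z) (hacc : ¬ Acc (Child p x) (0, rootStack)) :
    (machine w).outputs z x (Function.update zeroR 0 w) := by
  obtain ⟨Y, hY0, hY, hbranch⟩ := run_branch (w := w) hz hacc stack_rootStack
  obtain ⟨N, haccept⟩ := run_accept (w := w) (z := z) (x := x) hY0 hY
  exact outputs_of_run (run_start.trans
    ((hbranch.mono (Set.subset_univ _) (Set.subset_univ _)).trans haccept))

end Search

end TreeSearch

section Trees

open Encodable MeasureTheory PiNat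

theorem exists_isClosed_of_analyticSet {γ : Type*} [TopologicalSpace γ] [T2Space γ]
    {B : Set (ℕ → γ)} (hB : AnalyticSet B) :
    ∃ C : Set (ℕ → ℕ × γ), IsClosed C ∧ ∀ x, x ∈ B ↔ ∃ t ∈ C, ∀ k, (t k).2 = x k := by
  rw [AnalyticSet] at hB
  obtain rfl | ⟨f, hf, rfl⟩ := hB
  · exact ⟨∅, isClosed_empty, by simp⟩
  · refine ⟨{t | f (fun k => (t k).1) = fun k => (t k).2},
      isClosed_eq (hf.comp (by fun_prop)) (by fun_prop), fun x => ⟨?_, ?_⟩⟩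
    · rintro ⟨s, rfl⟩
      exact ⟨fun k => (s k, f s k), rfl, fun _ => rfl⟩
    · rintro ⟨t, ht, hx⟩
      exact ⟨fun k => (t k).1, ht.trans (funext hx)⟩

/-- The tree of finite sequences extending to an element of `C`. As in `PiNat.res`, a sequence is
listed with its last entry first. -/
def tree {α : Type*} (C : Set (ℕ → α)) : Set (List α) := {l | ∃ t ∈ C, res t l.length = l}

theorem forall_res_mem_tree_iff {α : Type*} [TopologicalSpace α] [DiscreteTopology α]
    {C : Set (ℕ → α)} (hC : IsClosed C) {s : ℕ → α} :
    (∀ k, res s (k + 1) ∈ tree C) ↔ s ∈ C := by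
  refine ⟨fun h => ?_, fun hs k => ⟨s, hs, by rw [res_length]⟩⟩
  by_contra hs
  obtain ⟨n, hn⟩ := exists_disjoint_cylinder hC hs
  obtain ⟨t, ht, hts⟩ := h n
  rw [res_length] at hts
  refine Set.disjoint_left.1 hn ht (cylinder_anti s n.le_succ ?_)
  rwa [cylinder_eq_res]

/-- `l'` is a child of `l` in the tree `T`, and its new label is the bit of `x` at this level. -/
def Extends (T : Set (List (ℕ × Bool))) (x : R) (l' l : List (ℕ × Bool)) : Prop :=
  ∃ a, l' = a :: l ∧ a :: l ∈ T ∧ a.2 = x l.length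

variable {T : Set (List (ℕ × Bool))} {x : R}

theorem not_acc_extends_iff :
    ¬ Acc (Extends T x) [] ↔ ∃ s : ℕ → ℕ × Bool, ∀ k, res s (k + 1) ∈ T ∧ (s k).2 = x k := by
  rw [not_acc_iff_exists_descending_chain]
  constructor
  · rintro ⟨f, hf0, hf⟩
    choose s hs hT hx using hf
    have hres (k : ℕ) : f k = res s k := by
      induction k with
      | zero => exact hf0
      | succ k ih => rw [hs, ih, res_succ]
    exact ⟨s, fun k => ⟨by simpa only [res_succ, ← hres] using hT k, by
      simpa only [hres, res_length] using hx k⟩⟩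
  · rintro ⟨s, hs⟩
    exact ⟨res s, rfl, fun k => ⟨s k, rfl, (hs k).1, by rw [res_length, (hs k).2]⟩⟩

namespace TreeSearch

/-- The stack tape holding the codes of `l` and of all shorter sequences along it. -/
noncomputable def tape (l : List (ℕ × Bool)) : ℕ → Bool := fun n =>
  decide (∃ l', l' <:+ l ∧ n = cell (encode l'))

/-- The node of the searched tree that represents `l`. -/
noncomputable def node (l : List (ℕ × Bool)) : ℕ × (ℕ → Bool) := (encode l, tape l)

/-- The pattern for searching `T`: the node coding `a :: l ∈ T` asks the input for the bit `a.2` at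
position `l.length`, and the stack tape for being `tape (a :: l)` elsewhere. The other nodes ask for
a stack tape without the root, which never occurs. -/
noncomputable def pattern (T : Set (List (ℕ × Bool))) (v j : ℕ) : Bool × Bool :=
  match decode₂ (List (ℕ × Bool)) v with
  | some (a :: l) =>
    if a :: l ∈ T then if j = l.length then (true, a.2) else (false, tape (a :: l) j)
    else (false, false)
  | _ => (false, false)

variable {l l' : List (ℕ × Bool)} {a : ℕ × Bool}

theorem tape_cell_encode : tape l (cell (encode l')) = true ↔ l' <:+ l := by
  simp [tape, strictMono_cell.injective.eq_iff]

theorem node_nil : node [] = (0, rootStack) := by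
  refine Prod.ext encode_list_nil (funext fun n => ?_)
  by_cases hn : n = 0 <;> simp [node, tape, rootStack, zeroR, cell_zero, hn]

theorem tape_cons : tape (a :: l) = push (tape l) (encode (a :: l)) := by
  funext n
  by_cases hn : n = cell (encode (a :: l))
  · rw [hn, push, Function.update_self, tape_cell_encode]
  · rw [push, Function.update_of_ne hn, tape, tape, decide_eq_decide]
    simp only [List.suffix_cons_iff, or_and_right, exists_or, exists_eq_left, hn, false_or]

theorem tape_zero : tape l 0 = true := tape_cell_encode.2 l.nil_suffix

theorem encode_lt_encode_cons : encode l < encode (a :: l) := by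
  rw [encode_list_cons]
  exact Nat.lt_succ_of_le (Nat.right_le_pair _ _)

theorem length_lt_cell_encode_cons : l.length < cell (encode (a :: l)) :=
  (length_le_encode (a :: l)).trans (le_cell _)

theorem pattern_encode_cons (h : a :: l ∈ T) (j : ℕ) :
    pattern T (encode (a :: l)) j =
      if j = l.length then (true, a.2) else (false, tape (a :: l) j) := by
  rw [pattern, encodek₂]
  exact if_pos h

theorem exists_mem_of_pattern_ne {v j : ℕ} (h : pattern T v j ≠ (false, false)) :
    ∃ a l, a :: l ∈ T ∧ encode (a :: l) = v := by
  unfold pattern at h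
  split at h
  · next a l hv => exact ⟨a, l, by_contra fun hT => h (if_neg hT), mem_decode₂.1 hv⟩
  · exact absurd rfl h

theorem matches_pattern_iff {Y : ℕ → Bool} {v : ℕ} (hv : 0 < v) (hY : Y 0 = true) :
    Matches (pattern T) x Y v ↔ ∃ a l, (a :: l ∈ T ∧ a.2 = x l.length) ∧ encode (a :: l) = v ∧
      ∀ j < cell v, j ≠ l.length → Y j = tape (a :: l) j := by
  constructor
  · intro h
    obtain ⟨a, l, hT, rfl⟩ : ∃ a l, a :: l ∈ T ∧ encode (a :: l) = v :=
      exists_mem_of_pattern_ne (j := 0) fun h0 => by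
        simpa [h0, hY] using h 0 (cell_pos hv)
    simp only [Matches, pattern_encode_cons hT] at h
    exact ⟨a, l, ⟨hT, by simpa using (h _ length_lt_cell_encode_cons).symm⟩, rfl,
      fun j hj hne => by simpa [hne] using h j hj⟩
  · rintro ⟨a, l, ⟨hT, hx⟩, rfl, h⟩ j hj
    rw [pattern_encode_cons hT]
    by_cases hne : j = l.length
    · simp [hne, hx]
    · simpa [hne] using h j hj hne

/-- The cell `l'.length`, at which the stack tape is not tested, can only hold the code of `l'` when
`l'` is empty. -/
theorem eq_of_tape_eq {v : ℕ} (hl : encode l < v) (hl' : encode l' < v)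
    (h : ∀ j < cell v, j ≠ l'.length → tape l j = tape l' j) : l = l' := by
  have hsuffix : l' <:+ l := by
    cases l' with
    | nil => exact l.nil_suffix
    | cons a l' =>
      have hne : cell (encode (a :: l')) ≠ (a :: l').length :=
        ((length_le_encode _).trans_lt (lt_cell (Nat.succ_ne_zero _))).ne'
      rw [← tape_cell_encode, h _ (strictMono_cell hl') hne]
      exact tape_cell_encode.2 List.suffix_rfl
  by_contra hne
  have hlt : l'.length < l.length :=
    lt_of_le_of_ne hsuffix.length_le fun h => hne (hsuffix.eq_of_length h).symm
  have hcell := hlt.trans_le ((length_le_encode l).trans (le_cell _))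
  have hsuffix' : l <:+ l' := by
    rw [← tape_cell_encode, ← h _ (strictMono_cell hl) hcell.ne']
    exact tape_cell_encode.2 List.suffix_rfl
  exact hlt.not_ge hsuffix'.length_le

theorem child_node_iff {b : ℕ × (ℕ → Bool)} :
    Child (pattern T) x b (node l) ↔ ∃ l', Extends T x l' l ∧ node l' = b := by
  constructor
  · obtain ⟨v, Y⟩ := b
    rintro ⟨hlt : encode l < v, hpush : Y = push (tape l) v, hmatch : Matches (pattern T) x Y v⟩
    have hroot : Y 0 = true := by
      rw [hpush, push, Function.update_of_ne (cell_pos hlt).ne, tape_zero]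
    obtain ⟨a, l', ha, rfl, h⟩ := (matches_pattern_iff (Nat.zero_lt_of_lt hlt) hroot).1 hmatch
    have heq : l = l' := eq_of_tape_eq hlt encode_lt_encode_cons fun j hj hne => by
      have hj' := h j hj hne
      rwa [hpush, tape_cons, push, push, Function.update_of_ne hj.ne,
        Function.update_of_ne hj.ne] at hj'
    subst heq
    exact ⟨a :: l, ⟨a, rfl, ha⟩, by rw [node, tape_cons, hpush]⟩
  · rintro ⟨_, ⟨a, rfl, ha⟩, rfl⟩
    exact ⟨encode_lt_encode_cons, tape_cons,
      (matches_pattern_iff (Nat.zero_lt_of_lt encode_lt_encode_cons) tape_zero).2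
        ⟨a, l, ha, rfl, fun _ _ _ => rfl⟩⟩

theorem acc_child_node_iff : Acc (Child (pattern T) x) (node l) ↔ Acc (Extends T x) l := by
  constructor
  · intro h
    exact Subrelation.accessible (fun hl => child_node_iff.2 ⟨_, hl, rfl⟩)
      (InvImage.accessible node h)
  · exact Acc.of_fibration node fun _ _ => child_node_iff.1

end TreeSearch

end Trees

theorem exists_oracle_machine_outputs {B : Set R} (hB : MeasureTheory.AnalyticSet B) :
    ∃ z, ∀ w x,
      (x ∈ B → (TreeSearch.machine w).outputs z x (Function.update zeroR 0 w)) ∧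
        (x ∉ B → (TreeSearch.machine w).outputs z x (Function.update zeroR 0 !w)) := by
  obtain ⟨C, hC, hB⟩ := exists_isClosed_of_analyticSet hB
  obtain ⟨z, hz⟩ := TreeSearch.exists_encodes (TreeSearch.pattern (tree C))
  have hbranch (x : R) : x ∈ B ↔
      ¬ Acc (TreeSearch.Child (TreeSearch.pattern (tree C)) x) (0, TreeSearch.rootStack) := by
    rw [← TreeSearch.node_nil, TreeSearch.acc_child_node_iff, not_acc_extends_iff, hB]
    simp only [forall_and, forall_res_mem_tree_iff hC]
  exact ⟨z, fun w x => ⟨fun hx => TreeSearch.machine_outputs_of_not_acc hz ((hbranch x).1 hx),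
    fun hx => TreeSearch.machine_outputs_of_acc hz (not_not.1 (mt (hbranch x).2 hx))⟩⟩

theorem update_zeroR_true : Function.update zeroR 0 true = oneR := by
  funext n
  by_cases hn : n = 0 <;> simp [zeroR, oneR, hn]

theorem update_zeroR_false : Function.update zeroR 0 false = zeroR :=
  Function.update_eq_self 0 zeroR

end ITTM

/-- **Every Π¹₁ (and every Σ¹₁) set is infinite time decidable** (with a real
parameter): for every set `A ⊆ 2^ℕ` which is coanalytic (its complement is
analytic) or analytic, there are a real oracle `z` and an oracle program such
that on any input `x` the oracle computation halts with output `⟨1,0,0,…⟩` if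
`x ∈ A` and `⟨0,0,0,…⟩` if `x ∉ A`. -/
theorem coanalytic_and_analytic_decidable_from_a_real (A : Set ITTM.R)
    (hA : MeasureTheory.AnalyticSet Aᶜ ∨ MeasureTheory.AnalyticSet A) :
    ∃ (z : ITTM.R) (M : ITTM.OMachine), ∀ x : ITTM.R,
      (x ∈ A → M.outputs z x ITTM.oneR) ∧ (x ∉ A → M.outputs z x ITTM.zeroR) := by
  rcases hA with hA | hA <;> obtain ⟨z, hz⟩ := ITTM.exists_oracle_machine_outputs hA
  · refine ⟨z, ITTM.TreeSearch.machine false, fun x => ?_⟩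
    have h := hz false x
    rw [Bool.not_false, ITTM.update_zeroR_true, ITTM.update_zeroR_false] at h
    exact ⟨fun hx => h.2 (not_not.2 hx), h.1⟩
  · refine ⟨z, ITTM.TreeSearch.machine true, fun x => ?_⟩
    have h := hz true x
    rwa [Bool.not_true, ITTM.update_zeroR_true, ITTM.update_zeroR_false] at h
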